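/- arXiv:2310.02387 — 2 statements merged into one kernel-verified Lean document; each statement's English description precedes it below -/
import Mathlib

section
/- Let n ≥ 4 be an even integer, let A be the matrix defined below, and let ε be a real number with 0 < ε ≤ 1/(56n³). If (x*, y*) is an ε²-approximate Nash equilibrium of the identical-payoff game with matrix A, then x*_{n/2} ≥ 1 − nε and y*_{n/2+1} ≥ 1 − nε. -/
/-!
The nonzero entries of `A` form a path. Listing rows and columns in the order
`row n, col 1, row 1, col n, row n-1, col 2, row 2, col n-1, …, row n/2, col n/2+1`,
consecutive vertices `v_{k-1}, v_k` carry the payoff `k` for `k = 1, …, 2n-1`, and all other payoffs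
vanish. Writing `z_k` for the mass on `v_k`, the payoff of the pure strategy `v_k` is
`p_k = k z_{k-1} + (k+1) z_{k+1}`.

Let `U` be the equilibrium payoff. Every `p_k` is at most `U + ε²`, and a strategy of mass more than
`ε` has `p_k ≥ U - ε` (`le_payoff_of_lt_mass`). By induction along the path, `z_k ≤ ε` for all
`k ≤ 2n-3` (`mass_le_of_prev_le`): if `z_{k-1} ≤ ε < z_k`, then
`(k+2) z_{k+1} ≤ p_{k+2} ≤ U + ε² ≤ p_k + ε + ε² ≤ k ε + (k+1) z_{k+1} + ε + ε²`, so `z_{k+1}` is of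
order `kε`, hence `U` of order `k²ε`; this contradicts `n (U + ε²) ≥ 1`, which holds because
`z_k ≤ p_{k+1} ≤ U + ε²` for every row `v_k`. All the mass outside the last two vertices is thus at
most `(n-1) ε` for each player.
-/

open Finset

/-- The `n × n` payoff matrix `A` (1-based indices), closed form:
for `i ∈ {0,…,n/2−1}`: `A_{i+1,i+1} = 4i+2`, `A_{i+1,n−i} = 4i+3`, `A_{n−i,i+1} = 4i+1`;
for `i ∈ {1,…,n/2−1}`: `A_{n−i,n−i+1} = 4i`; all other entries `0`. -/
noncomputable def Amat (n i j : ℕ) : ℝ :=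
  if i = j ∧ 1 ≤ i ∧ i ≤ n / 2 then 4 * (i : ℝ) - 2
  else if i + j = n + 1 ∧ 1 ≤ i ∧ i ≤ n / 2 then 4 * (i : ℝ) - 1
  else if i + j = n + 1 ∧ 1 ≤ j ∧ j ≤ n / 2 then 4 * (j : ℝ) - 3
  else if j = i + 1 ∧ n / 2 + 1 ≤ i ∧ i ≤ n - 1 then 4 * ((n : ℝ) - (i : ℝ))
  else 0

/-- `x` is a probability vector over coordinates `{1,…,n}`. -/
def ProbVec (n : ℕ) (x : ℕ → ℝ) : Prop :=
  (∀ k ∈ Finset.Icc 1 n, 0 ≤ x k) ∧ ∑ k ∈ Finset.Icc 1 n, x k = 1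

/-- The common payoff `xᵀ A y`. -/
noncomputable def pay (n : ℕ) (x y : ℕ → ℝ) : ℝ :=
  ∑ i ∈ Finset.Icc 1 n, ∑ j ∈ Finset.Icc 1 n, x i * Amat n i j * y j

/-- `(x, y)` is an `ε`-approximate Nash equilibrium of the identical-payoff game with matrix `A`. -/
def IsNashEq (n : ℕ) (ε : ℝ) (x y : ℕ → ℝ) : Prop :=
  ProbVec n x ∧ ProbVec n y ∧
  (∀ x', ProbVec n x' → pay n x y ≥ pay n x' y - ε) ∧
  (∀ y', ProbVec n y' → pay n x y ≥ pay n x y' - ε)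

/-- `(I t, J t)` (for `t = 1, 2, …`) is a fictitious play sequence for the
identical-payoff game with matrix `A`. -/
def IsFPSeq (n : ℕ) (I J : ℕ → ℕ) : Prop :=
  (∀ t, 1 ≤ t → I t ∈ Finset.Icc 1 n ∧ J t ∈ Finset.Icc 1 n) ∧
  ∀ t, 2 ≤ t →
    (∀ i ∈ Finset.Icc 1 n,
      ∑ s ∈ Finset.Icc 1 (t - 1), Amat n i (J s) ≤
        ∑ s ∈ Finset.Icc 1 (t - 1), Amat n (I t) (J s)) ∧
    (∀ j ∈ Finset.Icc 1 n,
      ∑ s ∈ Finset.Icc 1 (t - 1), Amat n (I s) j ≤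
        ∑ s ∈ Finset.Icc 1 (t - 1), Amat n (I s) (J t))

/-- Cumulative utility of row `r` at round `t`. -/
noncomputable def Rcum (n : ℕ) (J : ℕ → ℕ) (t r : ℕ) : ℝ :=
  ∑ s ∈ Finset.Icc 1 (t - 1), Amat n r (J s)

/-- Cumulative utility of column `c` at round `t`. -/
noncomputable def Ccum (n : ℕ) (I : ℕ → ℕ) (t c : ℕ) : ℝ :=
  ∑ s ∈ Finset.Icc 1 (t - 1), Amat n (I s) c

/-- Empirical strategy at round `T` of the player playing the sequence `I`. -/
noncomputable def empir (T : ℕ) (I : ℕ → ℕ) (k : ℕ) : ℝ :=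
  (1 / (T : ℝ)) * ∑ s ∈ Finset.Icc 1 T, if I s = k then (1 : ℝ) else 0

/-- The `k`-th standard basis vector (pure strategy `k`). -/
noncomputable def purevec (k : ℕ) : ℕ → ℝ := fun m => if m = k then 1 else 0

/-- Payoff of the pure row `i` against `y`. -/
noncomputable def rowPay (n : ℕ) (y : ℕ → ℝ) (i : ℕ) : ℝ :=
  ∑ j ∈ Finset.Icc 1 n, Amat n i j * y j

/-- Payoff of the pure column `j` against `x`. -/
noncomputable def colPay (n : ℕ) (x : ℕ → ℝ) (j : ℕ) : ℝ :=
  ∑ i ∈ Finset.Icc 1 n, Amat n i j * x i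

lemma pay_eq_row (n : ℕ) (x y : ℕ → ℝ) :
    pay n x y = ∑ i ∈ Finset.Icc 1 n, x i * rowPay n y i := by
  simp only [pay, rowPay, Finset.mul_sum, mul_assoc]

lemma pay_eq_col (n : ℕ) (x y : ℕ → ℝ) :
    pay n x y = ∑ j ∈ Finset.Icc 1 n, y j * colPay n x j := by
  simp only [pay, colPay, Finset.mul_sum]
  rw [Finset.sum_comm]
  refine Finset.sum_congr rfl fun j _ => Finset.sum_congr rfl fun i _ => ?_
  ring

lemma probVec_purevec {n k : ℕ} (hk : k ∈ Finset.Icc 1 n) : ProbVec n (purevec k) := by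
  refine ⟨fun m _ => ?_, ?_⟩
  · unfold purevec
    split_ifs <;> norm_num
  · simp only [purevec, Finset.sum_ite_eq', hk, if_true]

lemma pay_purevec_left {n i : ℕ} (hi : i ∈ Finset.Icc 1 n) (y : ℕ → ℝ) :
    pay n (purevec i) y = rowPay n y i := by
  simp only [pay_eq_row, purevec, ite_mul, one_mul, zero_mul, Finset.sum_ite_eq', hi, if_true]

lemma pay_purevec_right {n j : ℕ} (hj : j ∈ Finset.Icc 1 n) (x : ℕ → ℝ) :
    pay n x (purevec j) = colPay n x j := by
  simp only [pay_eq_col, purevec, ite_mul, one_mul, zero_mul, Finset.sum_ite_eq', hj, if_true]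

/-- If no pure payoff `f i` exceeds the average `U` by more than `ε²`, then a strategy whose mass is
more than `ε` cannot fall short of `U` by more than `ε`. -/
lemma le_payoff_of_lt_mass {n : ℕ} {x f : ℕ → ℝ} {U ε : ℝ} (hx : ProbVec n x) (hε : 0 < ε)
    (hU : U = ∑ i ∈ Finset.Icc 1 n, x i * f i)
    (hf : ∀ i ∈ Finset.Icc 1 n, f i ≤ U + ε ^ 2)
    {i : ℕ} (hi : i ∈ Finset.Icc 1 n) (hxi : ε < x i) : U - ε ≤ f i := by
  have htotal : ∑ i ∈ Finset.Icc 1 n, x i * (U + ε ^ 2 - f i) = ε ^ 2 := by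
    simp only [mul_sub, Finset.sum_sub_distrib, ← Finset.sum_mul, hx.2, ← hU]
    ring
  have hterm : x i * (U + ε ^ 2 - f i) ≤ ε ^ 2 :=
    (Finset.single_le_sum (f := fun i => x i * (U + ε ^ 2 - f i))
      (fun k hk => mul_nonneg (hx.1 k hk) (by linarith [hf k hk])) hi).trans_eq htotal
  by_contra! hlt
  nlinarith [sq_nonneg ε]

lemma Amat_nonneg {n i j : ℕ} : 0 ≤ Amat n i j := by
  unfold Amat
  split_ifs with h₁ h₂ h₃ h₄
  · have : (1 : ℝ) ≤ i := by exact_mod_cast h₁.2.1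
    linarith
  · have : (1 : ℝ) ≤ i := by exact_mod_cast h₂.2.1
    linarith
  · have : (1 : ℝ) ≤ j := by exact_mod_cast h₃.2.1
    linarith
  · have : (i : ℝ) ≤ n := by exact_mod_cast (by omega : i ≤ n)
    linarith
  · exact le_rfl

lemma Amat_mul_le_rowPay {n i j : ℕ} {y : ℕ → ℝ} (hy : ProbVec n y) (hj : j ∈ Finset.Icc 1 n) :
    Amat n i j * y j ≤ rowPay n y i :=
  Finset.single_le_sum (f := fun j => Amat n i j * y j)
    (fun k hk => mul_nonneg Amat_nonneg (hy.1 k hk)) hj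

lemma Amat_mul_le_colPay {n i j : ℕ} {x : ℕ → ℝ} (hx : ProbVec n x) (hi : i ∈ Finset.Icc 1 n) :
    Amat n i j * x i ≤ colPay n x j :=
  Finset.single_le_sum (f := fun i => Amat n i j * x i)
    (fun k hk => mul_nonneg Amat_nonneg (hx.1 k hk)) hi

/-! ### The entries of the matrix, in the parametrization by `i < m = n / 2` -/

lemma Amat_diag {m i : ℕ} (hi : i < m) : Amat (2 * m) (i + 1) (i + 1) = 4 * i + 2 := by
  unfold Amat
  rw [if_pos (by omega)]
  push_cast
  ring

lemma Amat_antidiag_upper {m i : ℕ} (hi : i < m) :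
    Amat (2 * m) (i + 1) (2 * m - i) = 4 * i + 3 := by
  unfold Amat
  rw [if_neg (by omega), if_pos (by omega)]
  push_cast
  ring

lemma Amat_antidiag_lower {m i : ℕ} (hi : i < m) :
    Amat (2 * m) (2 * m - i) (i + 1) = 4 * i + 1 := by
  unfold Amat
  rw [if_neg (by omega), if_neg (by omega), if_pos (by omega)]
  push_cast
  ring

lemma Amat_superdiag {m i : ℕ} (hi : i + 1 < m) :
    Amat (2 * m) (2 * m - i - 1) (2 * m - i) = 4 * i + 4 := by
  unfold Amat
  rw [if_neg (by omega), if_neg (by omega), if_neg (by omega), if_pos (by omega),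
    Nat.sub_sub, Nat.cast_sub (by omega)]
  push_cast
  ring

/-- A sum over `Icc 1 n` whose terms vanish off two distinct indices. -/
lemma sum_eq_pair {n a b : ℕ} {f : ℕ → ℝ} (ha : a ∈ Finset.Icc 1 n) (hb : b ∈ Finset.Icc 1 n)
    (hab : a ≠ b) (h : ∀ j ∈ Finset.Icc 1 n, j ≠ a ∧ j ≠ b → f j = 0) :
    ∑ j ∈ Finset.Icc 1 n, f j = f a + f b :=
  Finset.sum_eq_add_of_mem a b ha hb hab h

lemma rowPay_upper {m i : ℕ} (hi : i < m) (y : ℕ → ℝ) :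
    rowPay (2 * m) y (i + 1) = (4 * i + 2) * y (i + 1) + (4 * i + 3) * y (2 * m - i) := by
  rw [rowPay, sum_eq_pair (a := i + 1) (b := 2 * m - i), Amat_diag hi, Amat_antidiag_upper hi]
  · simp; omega
  · simp; omega
  · omega
  · intro j hj h
    rw [Finset.mem_Icc] at hj
    rw [Amat, if_neg (by omega), if_neg (by omega), if_neg (by omega), if_neg (by omega), zero_mul]

lemma rowPay_bottom {m : ℕ} (hm : 0 < m) (y : ℕ → ℝ) : rowPay (2 * m) y (2 * m) = y 1 := by
  have h₁ : Amat (2 * m) (2 * m) 1 = 1 := by simpa using Amat_antidiag_lower hm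
  rw [rowPay, Finset.sum_eq_single 1, h₁, one_mul]
  · intro j hj h
    rw [Finset.mem_Icc] at hj
    rw [Amat, if_neg (by omega), if_neg (by omega), if_neg (by omega), if_neg (by omega), zero_mul]
  · intro h
    simp at h
    omega

lemma rowPay_lower {m i : ℕ} (hi : i + 1 < m) (y : ℕ → ℝ) :
    rowPay (2 * m) y (2 * m - i - 1) =
      (4 * i + 4) * y (2 * m - i) + (4 * i + 5) * y (i + 2) := by
  have h₁ : Amat (2 * m) (2 * m - i - 1) (i + 2) = 4 * i + 5 := by
    rw [Nat.sub_sub, Amat_antidiag_lower hi]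
    push_cast
    ring
  rw [rowPay, sum_eq_pair (a := 2 * m - i) (b := i + 2), Amat_superdiag hi, h₁]
  · simp; omega
  · simp; omega
  · omega
  · intro j hj h
    rw [Finset.mem_Icc] at hj
    rw [Amat, if_neg (by omega), if_neg (by omega), if_neg (by omega), if_neg (by omega), zero_mul]

lemma colPay_left {m i : ℕ} (hi : i < m) (x : ℕ → ℝ) :
    colPay (2 * m) x (i + 1) = (4 * i + 1) * x (2 * m - i) + (4 * i + 2) * x (i + 1) := by
  rw [colPay, sum_eq_pair (a := 2 * m - i) (b := i + 1), Amat_diag hi, Amat_antidiag_lower hi]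
  · simp; omega
  · simp; omega
  · omega
  · intro j hj h
    rw [Finset.mem_Icc] at hj
    rw [Amat, if_neg (by omega), if_neg (by omega), if_neg (by omega), if_neg (by omega), zero_mul]

lemma colPay_right {m i : ℕ} (hi : i + 1 < m) (x : ℕ → ℝ) :
    colPay (2 * m) x (2 * m - i) =
      (4 * i + 3) * x (i + 1) + (4 * i + 4) * x (2 * m - i - 1) := by
  rw [colPay, sum_eq_pair (a := i + 1) (b := 2 * m - i - 1), Amat_superdiag hi,
    Amat_antidiag_upper (by omega)]
  · simp; omega
  · simp; omega
  · omega
  · intro j hj h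
    rw [Finset.mem_Icc] at hj
    rw [Amat, if_neg (by omega), if_neg (by omega), if_neg (by omega), if_neg (by omega), zero_mul]

/-! ### Propagation along the path -/

/-- The inductive step at the vertex `v_k`: here `a`, `b`, `c` are the masses of
`v_{k-1}`, `v_k`, `v_{k+1}` and `p` is the payoff `p_k`. The mass `a` is multiplied by `k`, so its
value does not matter at the end `k = 0` of the path. -/
lemma mass_le_of_prev_le {n k U ε a b c p : ℝ} (hn : 4 ≤ n) (hk0 : 0 ≤ k) (hk : k ≤ 2 * n)
    (hε : 0 < ε) (hε1 : ε ≤ 1 / (56 * n ^ 3)) (hU : 1 ≤ n * (U + ε ^ 2))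
    (hp : p = k * a + (k + 1) * c) (hb : ε < b → U - ε ≤ p)
    (hc : (k + 2) * c ≤ U + ε ^ 2) (ha : k * a ≤ k * ε) : b ≤ ε := by
  by_contra! hlt
  have h₁ := hb hlt
  have hn3 : 56 * n ^ 3 * ε ≤ 1 := by
    rw [le_div_iff₀ (by positivity)] at hε1
    linarith
  have hεle : ε ≤ 1 := by
    have : 1 ≤ 56 * n ^ 3 := by nlinarith [pow_le_pow_left₀ (by norm_num) hn 3]
    nlinarith
  have hcle : c ≤ (k + 2) * ε := by nlinarith
  have hUle : U + ε ^ 2 ≤ (k + 2) ^ 2 * ε := by nlinarith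
  have hkn : (k + 2) ^ 2 ≤ 9 * n ^ 2 := by nlinarith
  have h₂ : n * (U + ε ^ 2) ≤ n * (9 * n ^ 2 * ε) := by
    have : (k + 2) ^ 2 * ε ≤ 9 * n ^ 2 * ε := mul_le_mul_of_nonneg_right hkn hε.le
    exact mul_le_mul_of_nonneg_left (hUle.trans this) (by linarith)
  nlinarith

/-- A probability vector with all coordinates but one at most `ε` puts the rest on that one. -/
lemma le_of_others_le {n a : ℕ} {x : ℕ → ℝ} {ε : ℝ} (hε : 0 < ε) (hx : ProbVec n x)
    (ha : a ∈ Finset.Icc 1 n) (h : ∀ j ∈ Finset.Icc 1 n, j ≠ a → x j ≤ ε) :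
    x a ≥ 1 - n * ε := by
  have hsum := hx.2
  rw [← Finset.add_sum_erase _ _ ha] at hsum
  have hle : ∑ j ∈ (Finset.Icc 1 n).erase a, x j ≤ ((Finset.Icc 1 n).erase a).card • ε :=
    Finset.sum_le_card_nsmul _ _ _ fun j hj =>
      h j (Finset.mem_of_mem_erase hj) (Finset.ne_of_mem_erase hj)
  have hcard : (((Finset.Icc 1 n).erase a).card : ℝ) ≤ n := by
    exact_mod_cast (Finset.card_erase_le).trans (by simp)
  rw [nsmul_eq_mul] at hle
  nlinarith

/-- every ε²-approximate Nash equilibrium puts mass at least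
`1 - nε` on row `n/2` and column `n/2 + 1`. -/
theorem approx_nash_concentrates
    (n : ℕ) (hn : 4 ≤ n) (hneven : Even n)
    (ε : ℝ) (hε0 : 0 < ε) (hε1 : ε ≤ 1 / (56 * (n : ℝ) ^ 3))
    (x y : ℕ → ℝ) (hNE : IsNashEq n (ε ^ 2) x y) :
    x (n / 2) ≥ 1 - n * ε ∧ y (n / 2 + 1) ≥ 1 - n * ε := by
  obtain ⟨m, rfl⟩ := even_iff_two_dvd.mp hneven
  obtain ⟨hx, hy, hbx, hby⟩ := hNE
  set U := pay (2 * m) x y with hUdef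
  have hm : 2 ≤ m := by omega
  have hdiv : 2 * m / 2 = m := by omega
  have hR : ∀ i ∈ Finset.Icc 1 (2 * m), rowPay (2 * m) y i ≤ U + ε ^ 2 := fun i hi => by
    have := hbx _ (probVec_purevec hi)
    rw [pay_purevec_left hi] at this
    linarith
  have hC : ∀ j ∈ Finset.Icc 1 (2 * m), colPay (2 * m) x j ≤ U + ε ^ 2 := fun j hj => by
    have := hby _ (probVec_purevec hj)
    rw [pay_purevec_right hj] at this
    linarith
  have hRx : ∀ i ∈ Finset.Icc 1 (2 * m), ε < x i → U - ε ≤ rowPay (2 * m) y i :=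
    fun i hi => le_payoff_of_lt_mass hx hε0 (pay_eq_row _ _ _) hR hi
  have hCy : ∀ j ∈ Finset.Icc 1 (2 * m), ε < y j → U - ε ≤ colPay (2 * m) x j :=
    fun j hj => le_payoff_of_lt_mass hy hε0 (pay_eq_col _ _ _) hC hj
  -- Every row meets some column `l + 1 ≤ m` in an entry that is at least `1`.
  have hxle : ∀ i ∈ Finset.Icc 1 (2 * m), x i ≤ U + ε ^ 2 := by
    intro i hi
    have hxi := hx.1 i hi
    rw [Finset.mem_Icc] at hi
    obtain ⟨l, hl, rfl | rfl⟩ : ∃ l < m, i = l + 1 ∨ i = 2 * m - l := by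
      rcases le_or_gt i m with h | h
      · exact ⟨i - 1, by omega, by omega⟩
      · exact ⟨2 * m - i, by omega, by omega⟩
    all_goals
      have hcol := hC (l + 1) (by simp; omega)
      have hl0 : (0 : ℝ) ≤ l := Nat.cast_nonneg l
    · have := Amat_mul_le_colPay (j := l + 1) hx (Finset.mem_Icc.mpr hi)
      rw [Amat_diag hl] at this
      nlinarith
    · have := Amat_mul_le_colPay (j := l + 1) hx (Finset.mem_Icc.mpr hi)
      rw [Amat_antidiag_lower hl] at this
      nlinarith
  have hU : 1 ≤ ((2 * m : ℕ) : ℝ) * (U + ε ^ 2) := by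
    have := Finset.sum_le_card_nsmul _ _ _ hxle
    rwa [hx.2, Nat.card_Icc, Nat.add_sub_cancel, nsmul_eq_mul] at this
  have hnR : (4 : ℝ) ≤ ((2 * m : ℕ) : ℝ) := by exact_mod_cast hn
  -- The four vertices `v_{4i}, …, v_{4i+3}` are `row n-i`, `col i+1`, `row i+1`, `col n-i`.
  have key : ∀ i : ℕ, i < m → x (2 * m - i) ≤ ε ∧ y (i + 1) ≤ ε ∧
      (i + 1 < m → x (i + 1) ≤ ε ∧ y (2 * m - i) ≤ ε) := by
    -- Only the smallness of `v_{4i}` depends on the previous block of vertices.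
    have block : ∀ i : ℕ, i < m → x (2 * m - i) ≤ ε → y (i + 1) ≤ ε ∧
        (i + 1 < m → x (i + 1) ≤ ε ∧ y (2 * m - i) ≤ ε) := by
      intro i hi hx₀
      have hi0 : (0 : ℝ) ≤ i := Nat.cast_nonneg i
      have him : 4 * (i : ℝ) + 3 ≤ 2 * ((2 * m : ℕ) : ℝ) := by
        exact_mod_cast (by omega : 4 * i + 3 ≤ 2 * (2 * m))
      have hmem₁ : i + 1 ∈ Finset.Icc 1 (2 * m) := by simp; omega
      have hmem₂ : 2 * m - i ∈ Finset.Icc 1 (2 * m) := by simp; omega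
      have hy₁ : y (i + 1) ≤ ε := by
        refine mass_le_of_prev_le (k := 4 * i + 1) (a := x (2 * m - i)) (c := x (i + 1)) hnR
          (by linarith) (by linarith) hε0 hε1 hU ?_ (hCy _ hmem₁) ?_ (by gcongr)
        · rw [colPay_left hi]
          ring
        · have h₁ := Amat_mul_le_colPay (j := 2 * m - i) hx hmem₁
          rw [Amat_antidiag_upper hi] at h₁
          linarith [hC _ hmem₂]
      refine ⟨hy₁, fun hi' => ?_⟩
      have hx₁ : x (i + 1) ≤ ε := by
        refine mass_le_of_prev_le (k := 4 * i + 2) (a := y (i + 1)) (c := y (2 * m - i)) hnR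
          (by linarith) (by linarith) hε0 hε1 hU ?_ (hRx _ hmem₁) ?_ (by gcongr)
        · rw [rowPay_upper hi]
          ring
        · have h₁ := Amat_mul_le_rowPay (i := 2 * m - i - 1) hy hmem₂
          rw [Amat_superdiag hi'] at h₁
          linarith [hR (2 * m - i - 1) (by simp; omega)]
      refine ⟨hx₁, ?_⟩
      refine mass_le_of_prev_le (k := 4 * i + 3) (a := x (i + 1)) (c := x (2 * m - i - 1)) hnR
        (by linarith) (by linarith) hε0 hε1 hU ?_ (hCy _ hmem₂) ?_ (by gcongr)
      · rw [colPay_right hi']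
        ring
      · have h₁ := Amat_mul_le_colPay (i := 2 * m - (i + 1)) (j := i + 1 + 1) hx (by simp; omega)
        rw [Amat_antidiag_lower hi'] at h₁
        push_cast at h₁
        rw [Nat.sub_sub]
        linarith [hC (i + 1 + 1) (by simp; omega)]
    intro i
    induction i with
    | zero =>
      intro hi
      suffices h : x (2 * m - 0) ≤ ε from ⟨h, block 0 hi h⟩
      refine mass_le_of_prev_le (k := 0) (a := 0) (c := y 1) hnR
        le_rfl (by linarith) hε0 hε1 hU ?_ (hRx _ (by simp; omega)) ?_ (by simp)
      · rw [Nat.sub_zero, rowPay_bottom hi]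
        ring
      · have h₁ := Amat_mul_le_rowPay (i := 1) (j := 1) hy (by simp; omega)
        have h₂ := Amat_diag hi
        norm_num at h₂
        rw [h₂] at h₁
        linarith [hR 1 (by simp; omega)]
    | succ i ih =>
      intro hi
      obtain ⟨-, -, h⟩ := ih (by omega)
      obtain ⟨-, hy₃⟩ := h hi
      have hi0 : (0 : ℝ) ≤ i := Nat.cast_nonneg i
      have him : 4 * (i : ℝ) + 4 ≤ 2 * ((2 * m : ℕ) : ℝ) := by
        exact_mod_cast (by omega : 4 * i + 4 ≤ 2 * (2 * m))
      suffices h : x (2 * m - (i + 1)) ≤ ε from ⟨h, block _ hi h⟩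
      refine mass_le_of_prev_le (k := 4 * i + 4) (a := y (2 * m - i)) (c := y (i + 2)) hnR
        (by linarith) (by linarith) hε0 hε1 hU ?_ (hRx _ (by simp; omega)) ?_ (by gcongr)
      · rw [← Nat.sub_sub, rowPay_lower hi]
        ring
      · have h₁ := Amat_mul_le_rowPay (i := i + 1 + 1) (j := i + 1 + 1) hy (by simp; omega)
        rw [Amat_diag hi] at h₁
        push_cast at h₁
        linarith [hR (i + 1 + 1) (by simp; omega)]
  rw [hdiv]
  constructor
  · refine le_of_others_le hε0 hx (by simp; omega) fun j hj hjm => ?_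
    rw [Finset.mem_Icc] at hj
    rcases le_or_gt j m with h | h
    · have := ((key (j - 1) (by omega)).2.2 (by omega)).1
      rwa [Nat.sub_add_cancel hj.1] at this
    · have := (key (2 * m - j) (by omega)).1
      rwa [Nat.sub_sub_self hj.2] at this
  · refine le_of_others_le hε0 hy (by simp; omega) fun j hj hjm => ?_
    rw [Finset.mem_Icc] at hj
    rcases le_or_gt j m with h | h
    · have := (key (j - 1) (by omega)).2.1
      rwa [Nat.sub_add_cancel hj.1] at this
    · have := ((key (2 * m - j) (by omega)).2.2 (by omega)).2
      rwa [Nat.sub_sub_self hj.2] at this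
end

section
/- Let n ≥ 4 be an even integer and let A be the matrix defined below. Consider any fictitious play sequence (i^{(t)}, j^{(t)}) for the identical-payoff game with matrix A with (i^{(1)}, j^{(1)}) = (n, 1). Then: (a) for every round t ≥ 2 at which the strategy profile changes, i.e., (i^{(t)}, j^{(t)}) ≠ (i^{(t−1)}, j^{(t−1)}), exactly one of the two coordinates changes (either i^{(t)} ≠ i^{(t−1)} and j^{(t)} = j^{(t−1)}, or i^{(t)} = i^{(t−1)} and j^{(t)} ≠ j^{(t−1)}); (b) if the row player changes strategy at round t (i^{(t)} ≠ i^{(t−1)}) and t' > t is the least round after t at which the strategy profile changes, then at round t' only the column changes (i^{(t')} = i^{(t'−1)} and j^{(t')} ≠ j^{(t'−1)}); symmetrically, if the column player changes strategy at round t, then at the next strategy change only the row changes. -/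
/-!
The nonzero entries of `A` are the numbers `1, 2, …, 2n - 1`, each occurring once, and they form a
staircase path: consecutive entries `k`, `k + 1` share a row if `k` is even and a column if `k` is
odd. Call the row or column containing the entries `k` and `k + 1` the *line* `k`; rows are the even
lines `0, 2, …, 2n - 2`, columns the odd lines `1, 3, …, 2n - 1`, and the entry `k` lies at the
intersection of the lines `k - 1` and `k`. The payoff at the intersection of two lines is
the larger of their numbers if these are consecutive and `0` otherwise (`Amat_eq`). This puts the
two players on the same footing.

Play starts at the entry `1` and only moves along the path, one step at a time. At the entry `k`
one round adds `k` to the utility of the lines `k - 1` and `k`, adds `k - 1` to line `k - 2` and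
`k + 1` to line `k + 1`. Hence line `k` stays the strict optimum for its player, while the only
competitor of line `k - 1` is line `k + 1`, which catches up by one in each round; so the only
possible move is from `k - 1` to `k + 1`, i.e. from entry `k` to entry `k + 1`. The line `k + 2`
starts from utility `0` at that moment and cannot yet compete with line `k`. This is the invariant
`PathInv`, preserved by `PathInv.stay` and `PathInv.move`. A move to an even entry is
a change of row, a move to an odd entry a change of column, so the changes alternate.
-/

open Finset

/-- The payoff at the intersection of the lines `j` and `x`. -/
def lineWt (j x : ℕ) : ℕ := if j = x + 1 then j else if x = j + 1 then x else 0

/-- The line number of row `i`. -/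
def rowLine (n i : ℕ) : ℕ := if i ≤ n / 2 then 4 * i - 2 else 4 * (n - i)

/-- The line number of column `j`. -/
def colLine (n j : ℕ) : ℕ := if j ≤ n / 2 then 4 * j - 3 else 4 * (n - j) + 3

/-- The utility added to line `j` by one round in which the lines `x` and `y` are played. Lines of
the same parity have weight `0`, so only the opponent's line contributes. -/
def gain (x y j : ℕ) : ℕ := lineWt j x + lineWt j y

/-- The utility of line `j` accumulated in rounds `1, …, t` when the row and column players play
the lines `X s` and `Y s`. -/
def cumLine (X Y : ℕ → ℕ) (t j : ℕ) : ℕ := ∑ s ∈ Finset.Icc 1 t, gain (X s) (Y s) j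

/-- The invariant of play: `v` gives the cumulative utilities of the lines `j < 2 * n` right after
a round in which the entry `k` was played. -/
structure PathInv (n : ℕ) (v : ℕ → ℕ) (k : ℕ) : Prop where
  pos : 1 ≤ k
  lt : k < 2 * n
  zero : ∀ j, k + 2 ≤ j → v j = 0
  same : ∀ j, j < 2 * n → j % 2 = k % 2 → j ≠ k → v j < v k
  other : ∀ j, j < 2 * n → j % 2 = (k + 1) % 2 → j ≠ k + 1 → j ≠ k - 1 → v j < v (k - 1)
  next : k + 1 < 2 * n → v (k + 1) ≤ v (k - 1) + 1
  large : k ≤ v k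

lemma gain_comm (x y j : ℕ) : gain x y j = gain y x j := Nat.add_comm _ _

lemma PathInv.stay {n k : ℕ} {v v' : ℕ → ℕ} (h : PathInv n v k)
    (hle : k + 1 < 2 * n → v (k + 1) ≤ v (k - 1))
    (hv : ∀ j, v' j = v j + gain (k - 1) k j) : PathInv n v' k := by
  obtain ⟨h0, h1, h2, h3, h4, h5, h6⟩ := h
  refine ⟨h0, h1, ?_, ?_, ?_, ?_, ?_⟩
  · intro j hj
    have := h2 j hj
    rw [hv]; unfold gain lineWt; split_ifs <;> omega
  · intro j hj hp hne
    have := h3 j hj hp hne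
    rw [hv, hv]; unfold gain lineWt; split_ifs <;> omega
  · intro j hj hp hne hne'
    have := h4 j hj hp hne hne'
    rw [hv, hv]; unfold gain lineWt; split_ifs <;> omega
  · intro hk
    have := hle hk
    rw [hv, hv]; unfold gain lineWt; split_ifs <;> omega
  · rw [hv]; omega

lemma PathInv.move {n k : ℕ} {v v' : ℕ → ℕ} (h : PathInv n v k) (hk : k + 1 < 2 * n)
    (hle : v (k - 1) ≤ v (k + 1))
    (hv : ∀ j, v' j = v j + gain k (k + 1) j) : PathInv n v' (k + 1) := by
  obtain ⟨h0, h1, h2, h3, h4, h5, h6⟩ := h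
  refine ⟨by omega, hk, ?_, ?_, ?_, ?_, ?_⟩
  · intro j hj
    have := h2 j (by omega)
    rw [hv]; unfold gain lineWt; split_ifs <;> omega
  · intro j hj hp hne
    have : v j ≤ v (k - 1) := by
      by_cases hjk : j = k - 1
      · rw [hjk]
      · exact (h4 j hj (by omega) hne hjk).le
    rw [hv, hv]; unfold gain lineWt; split_ifs <;> omega
  · intro j hj hp hne hne'
    have := h3 j hj (by omega) (by omega)
    rw [hv, hv, Nat.add_sub_cancel]; unfold gain lineWt; split_ifs <;> omega
  · intro _
    -- Line `k + 2` has just received its first payoff `k + 2`, line `k` holds at least `2 * k + 1`.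
    have := h2 (k + 1 + 1) (by omega)
    rw [hv, hv, Nat.add_sub_cancel]; unfold gain lineWt; split_ifs <;> omega
  · rw [hv]; unfold gain lineWt; split_ifs <;> omega

lemma cumLine_succ (X Y : ℕ → ℕ) (t j : ℕ) :
    cumLine X Y (t + 1) j = cumLine X Y t j + gain (X (t + 1)) (Y (t + 1)) j := by
  unfold cumLine
  rw [Finset.sum_Icc_succ_top (by omega)]

/-- One round of play: the player on line `k` (playing `P`) keeps it, and the player on line
`k - 1` (playing `Q`) keeps it or moves on to line `k + 1`. -/
lemma PathInv.step {n k P Q : ℕ} {v v' : ℕ → ℕ} (h : PathInv n v k)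
    (hP : P < 2 * n) (hQ : Q < 2 * n) (hPk : P % 2 = k % 2) (hQk : Q % 2 = (k + 1) % 2)
    (bP : ∀ j, j < 2 * n → j % 2 = P % 2 → v j ≤ v P)
    (bQ : ∀ j, j < 2 * n → j % 2 = Q % 2 → v j ≤ v Q)
    (hv : ∀ j, v' j = v j + gain P Q j) :
    P = k ∧ (Q = k - 1 ∧ PathInv n v' k ∨ Q = k + 1 ∧ PathInv n v' (k + 1)) := by
  have hpos := h.pos
  have hlt := h.lt
  have e1 : P = k := by
    by_contra hne
    have h1 := h.same P hP hPk hne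
    have h2 := bP k hlt hPk.symm
    omega
  subst e1
  refine ⟨rfl, ?_⟩
  have hb := bQ (P - 1) (by omega) (by omega)
  by_cases hq : Q = P + 1
  · right
    subst hq
    exact ⟨rfl, h.move hQ hb hv⟩
  · left
    have e2 : Q = P - 1 := by
      by_contra hne
      have h1 := h.other Q hQ hQk hq hne
      omega
    subst e2
    exact ⟨rfl, h.stay (fun hk => bQ _ hk (by omega)) (fun j => by rw [hv, gain_comm])⟩

/-- Play of the entry `k`: the even one of the lines `k - 1`, `k` is the row, the odd one the
column. -/
def AtEntry (k x y : ℕ) : Prop := k % 2 = 0 ∧ x = k ∧ y + 1 = k ∨ k % 2 = 1 ∧ x + 1 = k ∧ y = k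

lemma line_play {n : ℕ} (hn : 1 ≤ n) {X Y : ℕ → ℕ}
    (hX : ∀ t, 1 ≤ t → X t < 2 * n ∧ X t % 2 = 0)
    (hY : ∀ t, 1 ≤ t → Y t < 2 * n ∧ Y t % 2 = 1)
    (bX : ∀ t, 1 ≤ t → ∀ j, j < 2 * n → j % 2 = 0 → cumLine X Y t j ≤ cumLine X Y t (X (t + 1)))
    (bY : ∀ t, 1 ≤ t → ∀ j, j < 2 * n → j % 2 = 1 → cumLine X Y t j ≤ cumLine X Y t (Y (t + 1)))
    (hX1 : X 1 = 0) (hY1 : Y 1 = 1) :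
    ∃ K : ℕ → ℕ, ∀ t, 1 ≤ t → AtEntry (K t) (X t) (Y t) ∧
      (K (t + 1) = K t ∨ K (t + 1) = K t + 1) := by
  have step : ∀ t k, 1 ≤ t → PathInv n (cumLine X Y t) k →
      ∃ k', (k' = k ∨ k' = k + 1) ∧ AtEntry k' (X (t + 1)) (Y (t + 1)) ∧
        PathInv n (cumLine X Y (t + 1)) k' := by
    intro t k ht h
    obtain ⟨x1, x2⟩ := hX (t + 1) (by omega)
    obtain ⟨y1, y2⟩ := hY (t + 1) (by omega)
    have hpos := h.pos
    have hs := cumLine_succ X Y t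
    have bx := bX t ht
    have bY := bY t ht
    unfold AtEntry
    rcases Nat.mod_two_eq_zero_or_one k with hk | hk
    · obtain ⟨e, ⟨e', h'⟩ | ⟨e', h'⟩⟩ := h.step x1 y1 (by omega) (by omega)
        (fun j hj hp => bx j hj (by omega)) (fun j hj hp => bY j hj (by omega)) hs
      · exact ⟨k, by omega, by omega, h'⟩
      · exact ⟨k + 1, by omega, by omega, h'⟩
    · obtain ⟨e, ⟨e', h'⟩ | ⟨e', h'⟩⟩ := h.step (v' := cumLine X Y (t + 1)) y1 x1
        (by omega) (by omega)
        (fun j hj hp => bY j hj (by omega)) (fun j hj hp => bx j hj (by omega))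
        (fun j => by rw [hs, gain_comm])
      · exact ⟨k, by omega, by omega, h'⟩
      · exact ⟨k + 1, by omega, by omega, h'⟩
  have hv1 : ∀ j, cumLine X Y 1 j = gain 0 1 j := by
    intro j
    simp [cumLine, hX1, hY1]
  have inv1 : PathInv n (cumLine X Y 1) 1 := by
    refine ⟨le_rfl, by omega, ?_, ?_, ?_, ?_, ?_⟩
    · intro j hj
      rw [hv1]; unfold gain lineWt; split_ifs <;> omega
    · intro j hj hp hne
      rw [hv1, hv1]; unfold gain lineWt; split_ifs <;> omega
    · intro j hj hp hne hne'
      have h1 : gain 0 1 (1 - 1) = 1 := rfl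
      rw [hv1, hv1, h1]; unfold gain lineWt; split_ifs <;> omega
    · intro _
      rw [hv1, hv1]; simp [gain, lineWt]
    · rw [hv1]; simp [gain, lineWt]
  have main : ∀ t, 1 ≤ t → AtEntry (max (X t) (Y t)) (X t) (Y t) ∧
      PathInv n (cumLine X Y t) (max (X t) (Y t)) := by
    intro t ht
    induction t, ht using Nat.le_induction with
    | base =>
      rw [hX1, hY1]
      exact ⟨by unfold AtEntry; omega, inv1⟩
    | succ t ht ih =>
      obtain ⟨k', -, ha, hi⟩ := step t _ ht ih.2
      have : max (X (t + 1)) (Y (t + 1)) = k' := by unfold AtEntry at ha; omega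
      rw [this]
      exact ⟨ha, hi⟩
  refine ⟨fun t => max (X t) (Y t), fun t ht => ⟨(main t ht).1, ?_⟩⟩
  obtain ⟨k', hk', ha, -⟩ := step t _ ht (main t ht).2
  have : max (X (t + 1)) (Y (t + 1)) = k' := by unfold AtEntry at ha; omega
  simp only [this]
  exact hk'

lemma Amat_eq {n i j : ℕ} (hn : Even n) (hi : i ∈ Finset.Icc 1 n) (hj : j ∈ Finset.Icc 1 n) :
    Amat n i j = (lineWt (rowLine n i) (colLine n j) : ℝ) := by
  obtain ⟨m, rfl⟩ := hn
  rw [Finset.mem_Icc] at hi hj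
  have hm : (m + m) / 2 = m := by omega
  unfold Amat
  rw [hm]
  split_ifs with h1 h2 h3 h4
  · have : lineWt (rowLine (m + m) i) (colLine (m + m) j) + 2 = 4 * i := by
      unfold lineWt rowLine colLine; split_ifs <;> omega
    rw [← Nat.cast_inj (R := ℝ)] at this
    push_cast at this; linarith
  · have : lineWt (rowLine (m + m) i) (colLine (m + m) j) + 1 = 4 * i := by
      unfold lineWt rowLine colLine; split_ifs <;> omega
    rw [← Nat.cast_inj (R := ℝ)] at this
    push_cast at this; linarith
  · have : lineWt (rowLine (m + m) i) (colLine (m + m) j) + 3 = 4 * j := by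
      unfold lineWt rowLine colLine; split_ifs <;> omega
    rw [← Nat.cast_inj (R := ℝ)] at this
    push_cast at this; linarith
  · have : lineWt (rowLine (m + m) i) (colLine (m + m) j) + 4 * i = 4 * (m + m) := by
      unfold lineWt rowLine colLine; split_ifs <;> omega
    rw [← Nat.cast_inj (R := ℝ)] at this
    push_cast at this ⊢; linarith
  · have : lineWt (rowLine (m + m) i) (colLine (m + m) j) = 0 := by
      unfold lineWt rowLine colLine; split_ifs <;> omega
    rw [this]; simp

lemma lineWt_comm (x y : ℕ) : lineWt x y = lineWt y x := by
  unfold lineWt; split_ifs <;> omega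

lemma lineWt_parity {x y : ℕ} (h : x % 2 = y % 2) : lineWt x y = 0 := by
  unfold lineWt; split_ifs <;> omega

lemma rowLine_spec {n i : ℕ} (hn : Even n) (hi : i ∈ Finset.Icc 1 n) :
    rowLine n i < 2 * n ∧ rowLine n i % 2 = 0 := by
  obtain ⟨m, rfl⟩ := hn
  rw [Finset.mem_Icc] at hi
  unfold rowLine; split_ifs <;> omega

lemma colLine_spec {n i : ℕ} (hn : Even n) (hi : i ∈ Finset.Icc 1 n) :
    colLine n i < 2 * n ∧ colLine n i % 2 = 1 := by
  obtain ⟨m, rfl⟩ := hn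
  rw [Finset.mem_Icc] at hi
  unfold colLine; split_ifs <;> omega

lemma rowLine_inj {n i i' : ℕ} (hi : i ∈ Finset.Icc 1 n)
    (hi' : i' ∈ Finset.Icc 1 n) : rowLine n i = rowLine n i' ↔ i = i' := by
  rw [Finset.mem_Icc] at hi hi'
  unfold rowLine; split_ifs <;> omega

lemma colLine_inj {n i i' : ℕ} (hi : i ∈ Finset.Icc 1 n)
    (hi' : i' ∈ Finset.Icc 1 n) : colLine n i = colLine n i' ↔ i = i' := by
  rw [Finset.mem_Icc] at hi hi'
  unfold colLine; split_ifs <;> omega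

lemma rowLine_surj {n j : ℕ} (hn : Even n) (hj : j < 2 * n) (hp : j % 2 = 0) :
    ∃ i ∈ Finset.Icc 1 n, rowLine n i = j := by
  obtain ⟨m, rfl⟩ := hn
  by_cases h : j % 4 = 0
  · refine ⟨m + m - j / 4, Finset.mem_Icc.2 (by omega), ?_⟩
    unfold rowLine; split_ifs <;> omega
  · refine ⟨(j + 2) / 4, Finset.mem_Icc.2 (by omega), ?_⟩
    unfold rowLine; split_ifs <;> omega

lemma colLine_surj {n j : ℕ} (hn : Even n) (hj : j < 2 * n) (hp : j % 2 = 1) :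
    ∃ i ∈ Finset.Icc 1 n, colLine n i = j := by
  obtain ⟨m, rfl⟩ := hn
  by_cases h : j % 4 = 1
  · refine ⟨(j + 3) / 4, Finset.mem_Icc.2 (by omega), ?_⟩
    unfold colLine; split_ifs <;> omega
  · refine ⟨m + m - j / 4, Finset.mem_Icc.2 (by omega), ?_⟩
    unfold colLine; split_ifs <;> omega

section
variable {n : ℕ} {I J : ℕ → ℕ}

lemma sum_row (hn : Even n)
    (h : ∀ t, 1 ≤ t → I t ∈ Finset.Icc 1 n ∧ J t ∈ Finset.Icc 1 n) (t : ℕ) {i : ℕ}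
    (hi : i ∈ Finset.Icc 1 n) :
    ∑ s ∈ Finset.Icc 1 t, Amat n i (J s) =
      (cumLine (fun s => rowLine n (I s)) (fun s => colLine n (J s)) t (rowLine n i) : ℝ) := by
  unfold cumLine
  push_cast
  refine Finset.sum_congr rfl fun s hs => ?_
  obtain ⟨hI, hJ⟩ := h s (Finset.mem_Icc.1 hs).1
  have e := lineWt_parity ((rowLine_spec hn hi).2.trans (rowLine_spec hn hI).2.symm)
  rw [Amat_eq hn hi hJ, gain, e, Nat.zero_add]

lemma sum_col (hn : Even n)
    (h : ∀ t, 1 ≤ t → I t ∈ Finset.Icc 1 n ∧ J t ∈ Finset.Icc 1 n) (t : ℕ) {j : ℕ}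
    (hj : j ∈ Finset.Icc 1 n) :
    ∑ s ∈ Finset.Icc 1 t, Amat n (I s) j =
      (cumLine (fun s => rowLine n (I s)) (fun s => colLine n (J s)) t (colLine n j) : ℝ) := by
  unfold cumLine
  push_cast
  refine Finset.sum_congr rfl fun s hs => ?_
  obtain ⟨hI, hJ⟩ := h s (Finset.mem_Icc.1 hs).1
  have e := lineWt_parity ((colLine_spec hn hj).2.trans (colLine_spec hn hJ).2.symm)
  rw [Amat_eq hn hI hj, gain, e, Nat.add_zero, lineWt_comm]

/-- Fictitious play from the entry `1` visits the entries `K 1 ≤ K 2 ≤ …` in steps of at most one;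
each step to an even entry changes the row only and each step to an odd entry the column only. -/
lemma fp_entries (hn : 4 ≤ n) (hneven : Even n) (hFP : IsFPSeq n I J) (hI1 : I 1 = n)
    (hJ1 : J 1 = 1) : ∃ K : ℕ → ℕ, ∀ t, 1 ≤ t →
      (K (t + 1) = K t ∧ I (t + 1) = I t ∧ J (t + 1) = J t) ∨
      (K (t + 1) = K t + 1 ∧ K (t + 1) % 2 = 0 ∧ I (t + 1) ≠ I t ∧ J (t + 1) = J t) ∨
      (K (t + 1) = K t + 1 ∧ K (t + 1) % 2 = 1 ∧ I (t + 1) = I t ∧ J (t + 1) ≠ J t) := by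
  obtain ⟨hmem, hbr⟩ := hFP
  obtain ⟨K, hK⟩ := line_play (n := n) (X := fun s => rowLine n (I s))
    (Y := fun s => colLine n (J s)) (by omega)
    (fun t ht => rowLine_spec hneven (hmem t ht).1)
    (fun t ht => colLine_spec hneven (hmem t ht).2)
    (fun t ht j hj hp => by
      obtain ⟨i, hi, rfl⟩ := rowLine_surj hneven hj hp
      have := (hbr (t + 1) (by omega)).1 i hi
      rw [Nat.add_sub_cancel, sum_row hneven hmem t hi,
        sum_row hneven hmem t (hmem (t + 1) (by omega)).1] at this
      exact_mod_cast this)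
    (fun t ht j hj hp => by
      obtain ⟨i, hi, rfl⟩ := colLine_surj hneven hj hp
      have := (hbr (t + 1) (by omega)).2 i hi
      rw [Nat.add_sub_cancel, sum_col hneven hmem t hi,
        sum_col hneven hmem t (hmem (t + 1) (by omega)).2] at this
      exact_mod_cast this)
    (by simp only [hI1, rowLine]; split_ifs <;> omega)
    (by simp only [hJ1, colLine]; split_ifs <;> omega)
  refine ⟨K, fun t ht => ?_⟩
  obtain ⟨a, hs⟩ := hK t ht
  obtain ⟨a', -⟩ := hK (t + 1) (by omega)
  have rI := rowLine_inj (hmem (t + 1) (by omega)).1 (hmem t ht).1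
  have rJ := colLine_inj (hmem (t + 1) (by omega)).2 (hmem t ht).2
  unfold AtEntry at a a'
  rw [← rI, ← rJ, Ne, Ne, ← rI, ← rJ]
  clear rI rJ
  rcases a with ⟨h1, h2, h3⟩ | ⟨h1, h2, h3⟩ <;> rcases a' with ⟨h4, h5, h6⟩ | ⟨h4, h5, h6⟩ <;>
    rcases hs with hs | hs <;> omega

end

/-- (a) at every strategy change exactly one coordinate changes;
(b) successive strategy changes alternate between the two players. -/
theorem fp_alternating_switches
    (n : ℕ) (hn : 4 ≤ n) (hneven : Even n)
    (I J : ℕ → ℕ) (hFP : IsFPSeq n I J) (hI1 : I 1 = n) (hJ1 : J 1 = 1) :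
    (∀ t, 2 ≤ t → (I t, J t) ≠ (I (t - 1), J (t - 1)) →
      ((I t ≠ I (t - 1) ∧ J t = J (t - 1)) ∨ (I t = I (t - 1) ∧ J t ≠ J (t - 1)))) ∧
    (∀ t t', 2 ≤ t → I t ≠ I (t - 1) → t < t' →
      (I t', J t') ≠ (I (t' - 1), J (t' - 1)) →
      (∀ s, t < s → s < t' → (I s, J s) = (I (s - 1), J (s - 1))) →
      I t' = I (t' - 1) ∧ J t' ≠ J (t' - 1)) ∧
    (∀ t t', 2 ≤ t → J t ≠ J (t - 1) → t < t' →
      (I t', J t') ≠ (I (t' - 1), J (t' - 1)) →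
      (∀ s, t < s → s < t' → (I s, J s) = (I (s - 1), J (s - 1))) →
      J t' = J (t' - 1) ∧ I t' ≠ I (t' - 1)) := by
  obtain ⟨K, hK⟩ := fp_entries hn hneven hFP hI1 hJ1
  have hK' : ∀ t, 2 ≤ t →
      (K t = K (t - 1) ∧ I t = I (t - 1) ∧ J t = J (t - 1)) ∨
      (K t = K (t - 1) + 1 ∧ K t % 2 = 0 ∧ I t ≠ I (t - 1) ∧ J t = J (t - 1)) ∨
      (K t = K (t - 1) + 1 ∧ K t % 2 = 1 ∧ I t = I (t - 1) ∧ J t ≠ J (t - 1)) := by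
    intro t ht
    have := hK (t - 1) (by omega)
    rwa [Nat.sub_add_cancel (by omega)] at this
  have hconst : ∀ t t', 2 ≤ t → t < t' →
      (∀ s, t < s → s < t' → (I s, J s) = (I (s - 1), J (s - 1))) → K (t' - 1) = K t := by
    intro t t' ht htt' h
    have : ∀ s, t ≤ s → s < t' → K s = K t := by
      intro s hs
      induction s, hs using Nat.le_induction with
      | base => intro _; rfl
      | succ s hs ih =>
        intro hlt
        have h1 := h (s + 1) (by omega) hlt
        have h2 := hK s (by omega)
        rw [Nat.add_sub_cancel, Prod.mk.injEq] at h1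
        have := ih (by omega)
        omega
    exact this _ (by omega) (by omega)
  refine ⟨?_, ?_, ?_⟩
  · intro t ht hne
    rw [Ne, Prod.mk.injEq] at hne
    have := hK' t ht
    omega
  · intro t t' ht hI htt' hne h
    rw [Ne, Prod.mk.injEq] at hne
    have h1 := hK' t ht
    have h2 := hK' t' (by omega)
    have h3 := hconst t t' ht htt' h
    omega
  · intro t t' ht hJ htt' hne h
    rw [Ne, Prod.mk.injEq] at hne
    have h1 := hK' t ht
    have h2 := hK' t' (by omega)
    have h3 := hconst t t' ht htt' h
    omega
end
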